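/- For all n ≥ 1 and k ≥ 0, the number of self-dual Fishburn matrices of reduced size n whose first row has sum k is twice the number of row-Fishburn matrices of size n whose last column has sum k; that is, |M(n,k)| = 2|RM(n,k)|. -/

import Mathlib

open Finset

/-- Square matrices of nonnegative integers of dimension `m` (0-based indexing). -/
abbrev Mat (m : ℕ) := Matrix (Fin m) (Fin m) ℕ

/-- Upper-triangular: all entries strictly below the main diagonal vanish. -/
def UT {m : ℕ} (M : Mat m) : Prop := ∀ i j : Fin m, (j : ℕ) < (i : ℕ) → M i j = 0

/-- The size of a matrix: the sum of all its entries. -/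
def msize {m : ℕ} (M : Mat m) : ℕ := ∑ i : Fin m, ∑ j : Fin m, M i j

/-- Row `i` contains a nonzero entry. -/
def rowNonzero {m : ℕ} (M : Mat m) (i : Fin m) : Prop := ∃ j, M i j ≠ 0

/-- Column `j` contains a nonzero entry. -/
def colNonzero {m : ℕ} (M : Mat m) (j : Fin m) : Prop := ∃ i, M i j ≠ 0

/-- The dual matrix: transpose along the antidiagonal, `M̄_{i,j} = M_{m+1-j,m+1-i}`. -/
def dual {m : ℕ} (M : Mat m) : Mat m := fun i j => M j.rev i.rev

/-- A matrix is self-dual if it equals its dual. -/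
def SelfDual {m : ℕ} (M : Mat m) : Prop := M = dual M

/-- A Fishburn matrix: upper-triangular, every row and every column contains a
nonzero entry. -/
def IsFishburn {m : ℕ} (M : Mat m) : Prop :=
  UT M ∧ (∀ i, rowNonzero M i) ∧ (∀ j, colNonzero M j)

/-- The reduced size: sum of the entries in NW-cells and diagonal cells
(in 1-based terms, cells `(i,j)` with `i + j ≤ m + 1`). -/
def reducedSize {m : ℕ} (M : Mat m) : ℕ :=
  ∑ i : Fin m, ∑ j : Fin m, if (i : ℕ) + (j : ℕ) + 1 ≤ m then M i j else 0

/-- The reduced matrix: all entries in SE-cells are replaced by zeros. -/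
def reduced {m : ℕ} (M : Mat m) : Mat m :=
  fun i j => if (i : ℕ) + (j : ℕ) + 1 ≤ m then M i j else 0

/-- A super triangular matrix: upper-triangular and all SE-cells are zero. -/
def SuperTri {m : ℕ} (M : Mat m) : Prop :=
  UT M ∧ ∀ i j : Fin m, m < (i : ℕ) + (j : ℕ) + 1 → M i j = 0

/-- The sum of the first row. -/
def firstRowSum {m : ℕ} (M : Mat m) : ℕ :=
  ∑ i : Fin m, ∑ j : Fin m, if (i : ℕ) = 0 then M i j else 0

/-- The sum of the last column. -/
def lastColSum {m : ℕ} (M : Mat m) : ℕ :=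
  ∑ i : Fin m, ∑ j : Fin m, if (j : ℕ) + 1 = m then M i j else 0

/-- The sum of the diagonal cells (cells `(i,j)` with `i + j = m + 1`, 1-based). -/
def diagSum {m : ℕ} (M : Mat m) : ℕ :=
  ∑ i : Fin m, ∑ j : Fin m, if (i : ℕ) + (j : ℕ) + 1 = m then M i j else 0

/-- The sum of the center column (column `k+1` of a matrix of dimension `2k+1`). -/
def centerColSum {m : ℕ} (M : Mat m) : ℕ :=
  ∑ i : Fin m, ∑ j : Fin m, if 2 * (j : ℕ) + 1 = m then M i j else 0

/-- Square matrices of arbitrary dimension. -/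
abbrev SMat := Σ m : ℕ, Mat m

/-- `M(n)`: self-dual Fishburn matrices of reduced size `n`. -/
def Mset (n : ℕ) : Set SMat :=
  {A | IsFishburn A.2 ∧ SelfDual A.2 ∧ reducedSize A.2 = n}

/-- `M(n,k)`: matrices of `M(n)` whose first row has sum `k`. -/
def Mset₂ (n k : ℕ) : Set SMat := {A ∈ Mset n | firstRowSum A.2 = k}

/-- `M(n,k,p)`: matrices of `M(n,k)` whose diagonal cells have sum `p`. -/
def Mset₃ (n k p : ℕ) : Set SMat := {A ∈ Mset₂ n k | diagSum A.2 = p}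

/-- `EM(n,k)`: matrices of `M(n,k)` of even dimension. -/
def EMset (n k : ℕ) : Set SMat := {A ∈ Mset₂ n k | Even A.1}

/-- `OM(n,k)`: matrices of `M(n,k)` of odd dimension. -/
def OMset (n k : ℕ) : Set SMat := {A ∈ Mset₂ n k | Odd A.1}

/-- `RM(n)`: row-Fishburn matrices of size `n`. -/
def RMset (n : ℕ) : Set SMat :=
  {A | UT A.2 ∧ (∀ i, rowNonzero A.2 i) ∧ msize A.2 = n}

/-- `RM(n,k)`: row-Fishburn matrices of size `n` whose last column has sum `k`. -/
def RMset₂ (n k : ℕ) : Set SMat := {A ∈ RMset n | lastColSum A.2 = k}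

/-- `RM(n,k,p)`: matrices of `RM(n,k)` whose first row has sum `p`. -/
def RMset₃ (n k p : ℕ) : Set SMat := {A ∈ RMset₂ n k | firstRowSum A.2 = p}

/-- `SM(n)`: super triangular matrices of size `n` and dimension `2k+1` such that
(a) each of the first `k` columns contains a nonzero entry, and
(b) for `1 ≤ i ≤ k`, row `k+1-i` or column `k+1+i` contains a nonzero entry
(0-based: for `a < k`, row `a` or column `b` with `a + b = 2k` is nonzero). -/
def SMset (n : ℕ) : Set SMat :=
  {A | SuperTri A.2 ∧ msize A.2 = n ∧
    ∃ k : ℕ, A.1 = 2 * k + 1 ∧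
      (∀ j : Fin A.1, (j : ℕ) < k → colNonzero A.2 j) ∧
      (∀ a b : Fin A.1, (a : ℕ) < k → (a : ℕ) + (b : ℕ) = 2 * k →
        rowNonzero A.2 a ∨ colNonzero A.2 b)}

/-- `SM(n,k,p)`: matrices of `SM(n)` whose first row has sum `k` and whose center
column has sum `p`. -/
def SMset₃ (n k p : ℕ) : Set SMat :=
  {A ∈ SMset n | firstRowSum A.2 = k ∧ centerColSum A.2 = p}

/-- `B(n)`: upper-triangular matrices of size `n` in which every row except
possibly the first contains a nonzero entry. -/
def Bset (n : ℕ) : Set SMat :=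
  {A | UT A.2 ∧ (∀ i : Fin A.1, (i : ℕ) ≠ 0 → rowNonzero A.2 i) ∧ msize A.2 = n}

/-- `B(n,k,p)`: matrices of `B(n)` whose first row has sum `p` and whose last
column has sum `k`. -/
def Bset₃ (n k p : ℕ) : Set SMat :=
  {A ∈ Bset n | firstRowSum A.2 = p ∧ lastColSum A.2 = k}


namespace SD

/-- Common data type for both families: number `d` of pairs of columns, left columns `L`
(with the center column `L d`), right columns `R`, and an additional vector `u`. -/
@[ext] structure D where
  d : ℕ
  L : ℕ → ℕ → ℕ
  R : ℕ → ℕ → ℕ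
  u : ℕ → ℕ

/-- Sum of row `i`. -/
def rs (x : D) (i : ℕ) : ℕ := x.u i + ∑ j ∈ range (x.d + 1), (x.L j i + x.R j i)

/-- Total size. -/
def sz (q : ℕ) (x : D) : ℕ := ∑ i ∈ range (q + x.d + 1), rs x i

structure VP (q : ℕ) (x : D) : Prop where
  sL : ∀ j i, x.L j i ≠ 0 → j ≤ x.d ∧ i ≤ q + j
  sR : ∀ j i, x.R j i ≠ 0 → j < x.d ∧ i ≤ q + j
  su : ∀ i, x.u i ≠ 0 → i < q
  nL : ∀ j, j < x.d → ∃ i, x.L j i ≠ 0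
  nR : ∀ j, j < x.d → (∃ i, x.R j i ≠ 0) ∨ ∃ j', x.L j' (q + j) ≠ 0 ∨ x.R j' (q + j) ≠ 0

structure BP (q : ℕ) (x : D) : Prop where
  sL : ∀ j i, x.L j i ≠ 0 → j ≤ x.d ∧ i ≤ q + j
  sR : x.R = 0
  su : x.u = 0
  nL : ∀ j, j < x.d → ∃ i, x.L j i ≠ 0

/-- nonzero vector of length `q+1` -/
def NV (q : ℕ) (v : ℕ → ℕ) : Prop := (∀ i, v i ≠ 0 → i ≤ q) ∧ ∃ i, v i ≠ 0

def vs (q : ℕ) (v : ℕ → ℕ) : ℕ := ∑ i ∈ range (q + 1), v i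

def cons (v : ℕ → ℕ) (L : ℕ → ℕ → ℕ) : ℕ → ℕ → ℕ
  | 0 => v
  | j + 1 => L j

def skip (q i : ℕ) : ℕ := if i < q then i else i + 1

def ins (q : ℕ) (L : ℕ → ℕ → ℕ) : ℕ → ℕ → ℕ :=
  fun j i => if i < q then L j i else if i = q then 0 else L j (i - 1)

def del (q : ℕ) (L : ℕ → ℕ → ℕ) : ℕ → ℕ → ℕ := fun j i => L j (skip q i)

lemma del_ins (q L) : del q (ins q L) = L := by
  funext j i
  simp only [del, ins, skip]
  grind

lemma ins_del (q L) (h : ∀ j, L j q = 0) : ins q (del q L) = L := by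
  funext j i
  simp only [del, ins, skip]
  have := h j
  grind

lemma sum_skip (q N : ℕ) (h : q ≤ N) (f : ℕ → ℕ) (h0 : f q = 0) :
    ∑ i ∈ range N, f (skip q i) = ∑ i ∈ range (N + 1), f i := by
  obtain ⟨r, rfl⟩ := Nat.exists_eq_add_of_le h
  rw [Finset.sum_range_add, show q + r + 1 = q + (r + 1) by ring, Finset.sum_range_add,
    Finset.sum_range_succ' (fun x => f (q + x))]
  simp only [Nat.add_zero, h0]
  congr 1
  · apply Finset.sum_congr rfl
    intro i hi
    simp [skip, Finset.mem_range.mp hi]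
  · apply Finset.sum_congr rfl
    intro i hi
    simp [skip, add_assoc]

lemma vs_ext (q : ℕ) (v : ℕ → ℕ) (hv : ∀ i, v i ≠ 0 → i ≤ q) (N : ℕ) (h : q + 1 ≤ N) :
    ∑ i ∈ range N, v i = vs q v := by
  unfold vs
  symm
  apply Finset.sum_subset
  · intro i; simp; omega
  · intro i _ hi
    by_contra hc
    have := hv i hc
    simp at hi
    omega

open Classical in
noncomputable def fwd (q : ℕ) (x : D) : (ℕ → ℕ) × D :=
  if x.u = 0 then (x.L 0, ⟨x.d - 1, fun j => x.L (j + 1), fun j => x.R (j + 1), x.R 0⟩)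
  else (x.u, ⟨x.d, ins q x.L, ins q x.R, 0⟩)

def Act (q : ℕ) (v : ℕ → ℕ) (x : D) : Prop :=
  x.u ≠ 0 ∨ v q ≠ 0 ∨ ∃ j, x.L j q ≠ 0 ∨ x.R j q ≠ 0

open Classical in
noncomputable def bwd (q : ℕ) (p : (ℕ → ℕ) × D) : D :=
  if Act q p.1 p.2 then ⟨p.2.d + 1, cons p.1 p.2.L, cons p.2.u p.2.R, 0⟩
  else ⟨p.2.d, del q p.2.L, del q p.2.R, p.1⟩

def TV (q n k : ℕ) (x : D) : Prop :=
  (VP q x ∧ sz q x = n ∧ rs x 0 = k) ∧ ¬ (x.d = 0 ∧ x.u = 0)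

def SV (q n k : ℕ) (v : ℕ → ℕ) (x : D) : Prop :=
  NV q v ∧ VP (q + 1) x ∧ vs q v + sz (q + 1) x = n ∧ v 0 + rs x 0 = k

lemma rs_cons (v : ℕ → ℕ) (x : D) (i : ℕ) :
    rs ⟨x.d + 1, cons v x.L, cons x.u x.R, 0⟩ i = v i + rs x i := by
  simp only [rs, Finset.sum_range_succ' _ (x.d + 1), cons, Pi.zero_apply]
  ring

lemma sz_cons (q : ℕ) (v : ℕ → ℕ) (hv : NV q v) (x : D) :
    sz q ⟨x.d + 1, cons v x.L, cons x.u x.R, 0⟩ = vs q v + sz (q + 1) x := by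
  simp only [sz, rs_cons, Finset.sum_add_distrib]
  rw [vs_ext q v hv.1 _ (by omega)]
  congr 2; ring_nf

lemma bwd_mem (q n k : ℕ) (p : (ℕ → ℕ) × D) (h : SV q n k p.1 p.2) : TV q n k (bwd q p) := by
  obtain ⟨v, x⟩ := p
  obtain ⟨hv, hx, h1, h2⟩ := h
  dsimp only at hv hx h1 h2
  unfold bwd
  split_ifs with ha
  · refine ⟨⟨⟨?_, ?_, ?_, ?_, ?_⟩, ?_, ?_⟩, ?_⟩
    · rintro (_ | j) i hi
      · exact ⟨by simp, hv.1 i hi⟩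
      · have := hx.sL j i hi
        dsimp only; omega
    · rintro (_ | j) i hi
      · have := hx.su i hi
        dsimp only; omega
      · have := hx.sR j i hi
        dsimp only; omega
    · intro i hi; simp at hi
    · rintro (_ | j) hj
      · exact hv.2
      · exact hx.nL j (by simpa using hj)
    · rintro (_ | j) hj
      · rcases ha with ha | ha | ⟨j, ha⟩
        · left
          exact Function.ne_iff.mp ha
        · right; exact ⟨0, Or.inl ha⟩
        · right; exact ⟨j + 1, ha⟩
      · rcases hx.nR j (by simpa using hj) with h | ⟨j', h⟩
        · left; exact h
        · right
          refine ⟨j' + 1, ?_⟩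
          simp only [cons]
          rwa [show q + (j + 1) = q + 1 + j by ring]
    · rw [← h1]; exact sz_cons q v hv x
    · rw [← h2]; exact rs_cons v x 0
    · simp
  · simp only [Act, not_or, not_not, not_exists] at ha
    obtain ⟨hu, hvq, hLR⟩ := ha
    have hvq' : ∀ i, v i ≠ 0 → i < q := by
      intro i hi
      rcases (hv.1 i hi).lt_or_eq with h | h
      · exact h
      · subst h; exact absurd hvq hi
    obtain ⟨i0, hi0⟩ := hv.2
    have hq : 0 < q := by have := hvq' _ hi0; omega
    have hrs : ∀ i, rs ⟨x.d, del q x.L, del q x.R, v⟩ i = v i + rs x (skip q i) := by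
      intro i
      simp [rs, del, hu]
    refine ⟨⟨⟨?_, ?_, ?_, ?_, ?_⟩, ?_, ?_⟩, ?_⟩
    · intro j i hi
      have := hx.sL j _ hi
      simp only [skip] at this
      dsimp only
      split_ifs at this <;> omega
    · intro j i hi
      have := hx.sR j _ hi
      simp only [skip] at this
      dsimp only
      split_ifs at this <;> omega
    · exact hvq'
    · intro j hj
      obtain ⟨i, hi⟩ := hx.nL j hj
      have hne : i ≠ q := by rintro rfl; exact hi (hLR j).1
      by_cases h : i < q
      · exact ⟨i, by simpa [del, skip, h] using hi⟩
      · refine ⟨i - 1, ?_⟩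
        have : skip q (i - 1) = i := by unfold skip; split_ifs <;> omega
        simpa [del, this] using hi
    · intro j hj
      rcases hx.nR j hj with ⟨i, hi⟩ | ⟨j', h⟩
      · left
        have hne : i ≠ q := by rintro rfl; exact hi (hLR j).2
        by_cases h : i < q
        · exact ⟨i, by simpa [del, skip, h] using hi⟩
        · refine ⟨i - 1, ?_⟩
          have : skip q (i - 1) = i := by unfold skip; split_ifs <;> omega
          simpa [del, this] using hi
      · right
        refine ⟨j', ?_⟩
        have : skip q (q + j) = q + 1 + j := by unfold skip; split_ifs <;> omega
        simpa [del, this] using h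
    · simp only [sz, hrs, Finset.sum_add_distrib]
      rw [vs_ext q v hv.1 _ (by omega), sum_skip q _ (by omega), ← h1]
      · simp only [sz]; congr 2; ring_nf
      · simp [rs, hu, hLR]
    · rw [hrs, ← h2]; simp [skip, hq]
    · rintro ⟨_, h⟩
      apply hi0
      exact congrFun h i0

lemma bwd_fwd (q n k : ℕ) (x : D) (h : TV q n k x) : bwd q (fwd q x) = x := by
  obtain ⟨⟨hx, _, _⟩, hb⟩ := h
  unfold fwd
  split_ifs with hu
  · have hd : x.d ≠ 0 := fun h => hb ⟨h, hu⟩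
    have hA : Act q (x.L 0) ⟨x.d - 1, fun j => x.L (j + 1), fun j => x.R (j + 1), x.R 0⟩ := by
      rcases hx.nR 0 (by omega) with ⟨i, hi⟩ | ⟨j', h⟩
      · left; exact Function.ne_iff.mpr ⟨i, hi⟩
      · rcases j' with _ | j'
        · rcases h with h | h
          · right; left; exact h
          · left; exact Function.ne_iff.mpr ⟨_, h⟩
        · right; right; exact ⟨j', h⟩
    unfold bwd
    rw [if_pos hA]
    ext1
    · dsimp only; omega
    · funext j; cases j <;> rfl
    · funext j; cases j <;> rfl
    · exact hu.symm
  · have hA : ¬ Act q x.u ⟨x.d, ins q x.L, ins q x.R, 0⟩ := by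
      simp only [Act, ins]
      have := hx.su q
      simp at this ⊢
      exact this
    unfold bwd
    rw [if_neg hA]
    simp only [del_ins]

lemma fwd_bwd (q n k : ℕ) (p : (ℕ → ℕ) × D) (h : SV q n k p.1 p.2) : fwd q (bwd q p) = p := by
  obtain ⟨v, x⟩ := p
  obtain ⟨hv, hx, h1, h2⟩ := h
  dsimp only at hv hx h1 h2
  unfold bwd
  split_ifs with ha
  · simp [fwd, cons]
  · simp only [Act, not_or, not_not, not_exists] at ha
    obtain ⟨hu, hvq, hLR⟩ := ha
    obtain ⟨i0, hi0⟩ := hv.2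
    have : v ≠ 0 := Function.ne_iff.mpr ⟨i0, hi0⟩
    simp only [fwd, this, if_false]
    rw [ins_del _ _ (fun j => (hLR j).1), ins_del _ _ (fun j => (hLR j).2), ← hu]

lemma fwd_mem (q n k : ℕ) (x : D) (h : TV q n k x) :
    SV q n k (fwd q x).1 (fwd q x).2 := by
  have hbf := bwd_fwd q n k x h
  obtain ⟨⟨hx, hn, hk⟩, hb⟩ := h
  by_cases hu : x.u = 0
  · have hd : x.d ≠ 0 := fun h => hb ⟨h, hu⟩
    obtain ⟨d, hd'⟩ := Nat.exists_eq_succ_of_ne_zero hd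
    have hv : NV q (x.L 0) := ⟨fun i hi => by simpa using (hx.sL 0 i hi).2, hx.nL 0 (by omega)⟩
    have e : x = ⟨d + 1, cons (x.L 0) (fun j => x.L (j + 1)),
        cons (x.R 0) (fun j => x.R (j + 1)), 0⟩ := by
      ext1
      · exact hd'
      · funext j; cases j <;> rfl
      · funext j; cases j <;> rfl
      · exact hu
    have ef : fwd q x = (x.L 0, ⟨d, fun j => x.L (j + 1), fun j => x.R (j + 1), x.R 0⟩) := by
      simp [fwd, hu, hd']
    rw [ef]
    refine ⟨hv, ⟨?_, ?_, ?_, ?_, ?_⟩, ?_, ?_⟩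
    · intro j i hi
      have := hx.sL _ i hi
      dsimp only; omega
    · intro j i hi
      have := hx.sR _ i hi
      dsimp only; omega
    · intro i hi
      have := hx.sR _ i hi
      omega
    · intro j hj
      exact hx.nL (j + 1) (by dsimp only at hj; omega)
    · intro j hj
      dsimp only at hj ⊢
      rcases hx.nR (j + 1) (by omega) with h | ⟨j', h⟩
      · left; exact h
      · right
        rcases j' with _ | j'
        · exfalso
          have a1 := hx.sL 0 (q + (j + 1))
          have a2 := hx.sR 0 (q + (j + 1))
          rcases h with h | h
          · have := a1 h; omega
          · have := a2 h; omega
        · refine ⟨j', ?_⟩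
          rwa [show q + 1 + j = q + (j + 1) by ring]
    · rw [← hn]
      conv_rhs => rw [e]
      exact (sz_cons q _ hv ⟨d, fun j => x.L (j + 1), fun j => x.R (j + 1), x.R 0⟩).symm
    · rw [← hk]
      conv_rhs => rw [e]
      exact (rs_cons _ ⟨d, fun j => x.L (j + 1), fun j => x.R (j + 1), x.R 0⟩ 0).symm
  · have ef : fwd q x = (x.u, ⟨x.d, ins q x.L, ins q x.R, 0⟩) := by
      simp [fwd, hu]
    rw [ef]
    obtain ⟨i0, hi0⟩ := Function.ne_iff.mp hu
    have hq : 0 < q := by have := hx.su i0 hi0; omega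
    have hv : NV q x.u := ⟨fun i hi => (hx.su i hi).le, i0, hi0⟩
    have hrs : ∀ i, rs x i = x.u i + rs ⟨x.d, ins q x.L, ins q x.R, 0⟩ (skip q i) := by
      intro i
      have h1 := fun j => congrFun (congrFun (del_ins q x.L) j) i
      have h2 := fun j => congrFun (congrFun (del_ins q x.R) j) i
      simp only [del] at h1 h2
      simp [rs, h1, h2]
    refine ⟨hv, ⟨?_, ?_, ?_, ?_, ?_⟩, ?_, ?_⟩
    · intro j i hi
      simp only [ins] at hi
      have a1 := hx.sL j i
      have a2 := hx.sL j (i - 1)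
      dsimp only
      split_ifs at hi
      · have := a1 hi; omega
      · omega
      · have := a2 hi; omega
    · intro j i hi
      simp only [ins] at hi
      have a1 := hx.sR j i
      have a2 := hx.sR j (i - 1)
      dsimp only
      split_ifs at hi
      · have := a1 hi; omega
      · omega
      · have := a2 hi; omega
    · intro i hi; simp at hi
    · intro j hj
      obtain ⟨i, hi⟩ := hx.nL j hj
      have := congrFun (congrFun (del_ins q x.L) j) i
      simp only [del] at this
      exact ⟨skip q i, by simpa [this] using hi⟩
    · intro j hj
      rcases hx.nR j hj with ⟨i, hi⟩ | ⟨j', h⟩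
      · left
        have := congrFun (congrFun (del_ins q x.R) j) i
        simp only [del] at this
        exact ⟨skip q i, by simpa [this] using hi⟩
      · right
        refine ⟨j', ?_⟩
        have a1 : ¬ (q + 1 + j < q) := by omega
        have a2 : ¬ (q + 1 + j = q) := by omega
        have a3 : q + 1 + j - 1 = q + j := by omega
        simpa only [ins, a1, a2, a3, if_false] using h
    · rw [← hn]
      simp only [sz, hrs, Finset.sum_add_distrib]
      rw [vs_ext q _ hv.1 _ (by omega), sum_skip q _ (by omega)]
      · congr 2; ring_nf
      · simp [rs, ins]
    · rw [← hk, hrs]; simp [skip, hq]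

noncomputable def eV (q n k : ℕ) : {x : D // TV q n k x} ≃ {p : (ℕ → ℕ) × D // SV q n k p.1 p.2} where
  toFun x := ⟨fwd q x.1, fwd_mem q n k x.1 x.2⟩
  invFun p := ⟨bwd q p.1, bwd_mem q n k p.1 p.2⟩
  left_inv x := Subtype.ext (bwd_fwd q n k x.1 x.2)
  right_inv p := Subtype.ext (fwd_bwd q n k p.1 p.2)

def TB (q n k : ℕ) (x : D) : Prop :=
  (BP q x ∧ sz q x = n ∧ rs x 0 = k) ∧ ¬ (x.d = 0 ∧ x.u = 0)

def SB (q n k : ℕ) (v : ℕ → ℕ) (x : D) : Prop :=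
  NV q v ∧ BP (q + 1) x ∧ vs q v + sz (q + 1) x = n ∧ v 0 + rs x 0 = k

lemma cons_zero : cons 0 0 = 0 := by
  funext j; cases j <;> rfl

def eB (q n k : ℕ) : {x : D // TB q n k x} ≃ {p : (ℕ → ℕ) × D // SB q n k p.1 p.2} where
  toFun x := ⟨(x.1.L 0, ⟨x.1.d - 1, fun j => x.1.L (j + 1), 0, 0⟩), by
    obtain ⟨x, ⟨hx, hn, hk⟩, hb⟩ := x
    dsimp only
    have hd : x.d ≠ 0 := fun h => hb ⟨h, hx.su⟩
    obtain ⟨d, hd'⟩ := Nat.exists_eq_succ_of_ne_zero hd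
    have hv : NV q (x.L 0) := ⟨fun i hi => by simpa using (hx.sL 0 i hi).2, hx.nL 0 (by omega)⟩
    have e : x = ⟨d + 1, cons (x.L 0) (fun j => x.L (j + 1)), cons 0 0, 0⟩ := by
      ext1
      · exact hd'
      · funext j; cases j <;> rfl
      · rw [cons_zero]; exact hx.sR
      · exact hx.su
    have hd2 : x.d - 1 = d := by omega
    rw [hd2]
    refine ⟨hv, ⟨?_, rfl, rfl, ?_⟩, ?_, ?_⟩
    · intro j i hi
      have := hx.sL _ i hi
      dsimp only; omega
    · intro j hj
      exact hx.nL (j + 1) (by dsimp only at hj; omega)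
    · rw [← hn]
      conv_rhs => rw [e]
      exact (sz_cons q _ hv ⟨d, fun j => x.L (j + 1), 0, 0⟩).symm
    · rw [← hk]
      conv_rhs => rw [e]
      exact (rs_cons _ ⟨d, fun j => x.L (j + 1), 0, 0⟩ 0).symm⟩
  invFun p := ⟨⟨p.1.2.d + 1, cons p.1.1 p.1.2.L, 0, 0⟩, by
    obtain ⟨⟨v, x⟩, hv, hx, h1, h2⟩ := p
    dsimp only at hv hx h1 h2 ⊢
    have e : (0 : ℕ → ℕ → ℕ) = cons x.u x.R := by rw [hx.su, hx.sR, cons_zero]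
    refine ⟨⟨⟨?_, rfl, rfl, ?_⟩, ?_, ?_⟩, ?_⟩
    · rintro (_ | j) i hi
      · exact ⟨by simp, hv.1 i hi⟩
      · have := hx.sL j i hi
        dsimp only; omega
    · rintro (_ | j) hj
      · exact hv.2
      · exact hx.nL j (by simpa using hj)
    · rw [← h1, e]; exact sz_cons q v hv x
    · rw [← h2, e]; exact rs_cons v x 0
    · simp⟩
  left_inv x := by
    obtain ⟨x, ⟨hx, hn, hk⟩, hb⟩ := x
    have hd : x.d ≠ 0 := fun h => hb ⟨h, hx.su⟩
    apply Subtype.ext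
    ext1
    · dsimp only; omega
    · funext j; cases j <;> rfl
    · exact hx.sR.symm
    · exact hx.su.symm
  right_inv p := by
    obtain ⟨⟨v, x⟩, hv, hx, h1, h2⟩ := p
    apply Subtype.ext
    dsimp only
    refine Prod.ext rfl ?_
    ext1
    · simp
    · rfl
    · exact hx.sR.symm
    · exact hx.su.symm

lemma base_iff (q : ℕ) (x : D) (h : x.d = 0 ∧ x.u = 0) : VP q x ↔ BP q x := by
  obtain ⟨h0, hu⟩ := h
  constructor
  · intro hx
    refine ⟨hx.sL, ?_, hu, hx.nL⟩
    funext j i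
    by_contra hc
    have := hx.sR j i hc
    omega
  · intro hx
    refine ⟨hx.sL, ?_, ?_, hx.nL, ?_⟩
    · intro j i; simp [hx.sR]
    · intro i; simp [hx.su]
    · intro j hj; omega

open Classical in
theorem main_equiv (n : ℕ) : ∀ q k, Nonempty ({x : D // VP q x ∧ sz q x = n ∧ rs x 0 = k} ≃
    {x : D // BP q x ∧ sz q x = n ∧ rs x 0 = k}) := by
  induction n using Nat.strong_induction_on with
  | _ n ih =>
  intro q k
  have key : ∀ v, Nonempty ({x // SV q n k v x} ≃ {x // SB q n k v x}) := by
    intro v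
    by_cases hv : NV q v ∧ vs q v ≤ n ∧ v 0 ≤ k
    · obtain ⟨hv, h1, h2⟩ := hv
      have hpos : 0 < vs q v := by
        obtain ⟨i, hi⟩ := hv.2
        exact Finset.sum_pos' (fun _ _ => Nat.zero_le _)
          ⟨i, by have := hv.1 i hi; simp; omega, by omega⟩
      obtain ⟨e⟩ := ih (n - vs q v) (by omega) (q + 1) (k - v 0)
      refine ⟨(Equiv.subtypeEquivRight ?_).trans (e.trans (Equiv.subtypeEquivRight ?_))⟩
      · intro x
        simp only [SV, hv, true_and]
        refine and_congr Iff.rfl (and_congr ?_ ?_) <;> omega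
      · intro x
        simp only [SB, hv, true_and]
        refine and_congr Iff.rfl (and_congr ?_ ?_) <;> omega
    · refine ⟨Equiv.subtypeEquivRight ?_⟩
      intro x
      constructor
      · rintro ⟨a, b, c, d⟩; exact absurd ⟨a, by omega, by omega⟩ hv
      · rintro ⟨a, b, c, d⟩; exact absurd ⟨a, by omega, by omega⟩ hv
  have e := key
  have e1 : {p : (ℕ → ℕ) × D // SV q n k p.1 p.2} ≃ {p : (ℕ → ℕ) × D // SB q n k p.1 p.2} :=
    (Equiv.subtypeProdEquivSigmaSubtype (SV q n k)).trans
      ((Equiv.sigmaCongrRight fun v => (e v).some).trans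
        (Equiv.subtypeProdEquivSigmaSubtype (SB q n k)).symm)
  have e2 : {x : D // TV q n k x} ≃ {x : D // TB q n k x} :=
    (eV q n k).trans (e1.trans (eB q n k).symm)
  let c : D → Prop := fun x => x.d = 0 ∧ x.u = 0
  have e3 : {x : {x : D // VP q x ∧ sz q x = n ∧ rs x 0 = k} // c x.1} ≃
      {x : {x : D // BP q x ∧ sz q x = n ∧ rs x 0 = k} // c x.1} :=
    (Equiv.subtypeSubtypeEquivSubtypeInter _ c).trans ((Equiv.subtypeEquivRight (by
      intro x
      constructor
      · rintro ⟨⟨a, b⟩, h⟩; exact ⟨⟨(base_iff q x h).1 a, b⟩, h⟩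
      · rintro ⟨⟨a, b⟩, h⟩; exact ⟨⟨(base_iff q x h).2 a, b⟩, h⟩)).trans
      (Equiv.subtypeSubtypeEquivSubtypeInter _ c).symm)
  have e4 : {x : {x : D // VP q x ∧ sz q x = n ∧ rs x 0 = k} // ¬ c x.1} ≃
      {x : {x : D // BP q x ∧ sz q x = n ∧ rs x 0 = k} // ¬ c x.1} :=
    (Equiv.subtypeSubtypeEquivSubtypeInter _ (fun x => ¬ c x)).trans (e2.trans
      (Equiv.subtypeSubtypeEquivSubtypeInter _ (fun x => ¬ c x)).symm)
  exact ⟨(Equiv.sumCompl (fun x : {x : D // VP q x ∧ sz q x = n ∧ rs x 0 = k} => c x.1)).symm.trans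
    ((Equiv.sumCongr e3 e4).trans
    (Equiv.sumCompl (fun x : {x : D // BP q x ∧ sz q x = n ∧ rs x 0 = k} => c x.1)))⟩

/-- Entry of a matrix, with natural number indices and default value 0. -/
def ent {m : ℕ} (M : Mat m) (i j : ℕ) : ℕ :=
  if h : i < m ∧ j < m then M ⟨i, h.1⟩ ⟨j, h.2⟩ else 0

lemma ent_val {m : ℕ} (M : Mat m) (i j : Fin m) : ent M i j = M i j := by
  simp [ent]

lemma ent_lt {m : ℕ} {M : Mat m} {i j : ℕ} (h : ent M i j ≠ 0) : i < m ∧ j < m := by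
  by_contra hc
  simp [ent, hc] at h

lemma ent_ut {m : ℕ} {M : Mat m} (hM : UT M) {i j : ℕ} (h : ent M i j ≠ 0) : i ≤ j := by
  have h' := ent_lt h
  by_contra hc
  apply h
  simp only [ent, h', and_self, dite_true]
  exact hM _ _ (by simpa using hc)

/-! ### Row-Fishburn matrices -/

def gU {m : ℕ} (M : Mat m) (j i : ℕ) : ℕ :=
  if j < m ∧ i < m then ent M (m - 1 - j) (m - 1 - i) else 0

def g (e : ℕ) (A : SMat) : D := ⟨A.1 - e, gU A.2, 0, 0⟩

lemma gU_supp {m : ℕ} {M : Mat m} (hM : UT M) {j i : ℕ} (h : gU M j i ≠ 0) :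
    j < m ∧ i ≤ j := by
  unfold gU at h
  split_ifs at h with h1
  · have := ent_ut hM h
    omega
  · exact absurd rfl h

lemma gU_val {m : ℕ} (M : Mat m) (i j : Fin m) : M i j = gU M (m - 1 - i) (m - 1 - j) := by
  have hi := i.2
  have hj := j.2
  unfold gU
  rw [if_pos (by omega), ← ent_val M]
  congr 1 <;> omega

lemma g_row {m : ℕ} (M : Mat m) : ∀ N, m ≤ N → ∀ i : ℕ, i < m →
    ∑ j ∈ range N, gU M j i = ∑ j ∈ range m, ent M j (m - 1 - i) := by
  intro N hN i hi
  rw [← Finset.sum_range_reflect (fun j => ent M j (m - 1 - i))]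
  symm
  have : ∀ j ∈ range m, ent M (m - 1 - j) (m - 1 - i) = gU M j i := by
    intro j hj
    simp at hj
    simp [gU, hi, hj]
  rw [Finset.sum_congr rfl this]
  apply Finset.sum_subset
  · intro i; simp; omega
  · intro j _ hj
    simp at hj
    simp [gU, hj]

lemma rs_g (e : ℕ) (he : e ≤ 1) (A : SMat) (hA : e ≤ A.1) (i : ℕ) (hi : i < A.1) :
    rs (g e A) i = ∑ j ∈ range A.1, ent A.2 j (A.1 - 1 - i) := by
  simp only [rs, g, Pi.zero_apply, add_zero, zero_add]
  exact g_row A.2 _ (by omega) i hi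

lemma rs_g0 (e : ℕ) (A : SMat) (i : ℕ) (hi : A.1 ≤ i) :
    rs (g e A) i = 0 := by
  simp only [rs, g, Pi.zero_apply, add_zero, zero_add]
  apply Finset.sum_eq_zero
  intro j _
  simp [gU]; omega

lemma sz_g (e : ℕ) (he : e ≤ 1) (A : SMat) (hA : e ≤ A.1) :
    sz 0 (g e A) = msize A.2 := by
  unfold sz
  have : ∑ i ∈ range (0 + (g e A).d + 1), rs (g e A) i = ∑ i ∈ range A.1, rs (g e A) i := by
    symm
    apply Finset.sum_subset
    · intro i; simp [g]; omega
    · intro i _ hi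
      simp at hi
      exact rs_g0 e A i hi
  rw [this, Finset.sum_congr rfl (fun i hi => rs_g e he A hA i (Finset.mem_range.mp hi)),
    Finset.sum_range_reflect (fun i => ∑ j ∈ range A.1, ent A.2 j i), Finset.sum_comm, msize]
  simp only [Finset.sum_range, ent_val]

lemma rs_g_zero (e : ℕ) (he : e ≤ 1) (A : SMat) (hA : e ≤ A.1) :
    rs (g e A) 0 = lastColSum A.2 := by
  obtain ⟨m, M⟩ := A
  rcases Nat.eq_zero_or_pos m with rfl | hm
  · rw [rs_g0 _ _ _ (le_refl _)]
    simp [lastColSum]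
  · rw [rs_g e he _ hA _ hm]
    simp only [Finset.sum_range, lastColSum]
    apply Finset.sum_congr rfl
    intro i _
    rw [Finset.sum_eq_single (⟨m - 1, by omega⟩ : Fin m)]
    · rw [if_pos (by simp; omega), ← ent_val M]; simp
    · intro j _ hj
      rw [if_neg]
      intro h
      apply hj
      ext
      simp; omega
    · simp

lemma g_inj (e : ℕ) (A A' : SMat) (hA : e ≤ A.1) (hA' : e ≤ A'.1) (h : g e A = g e A') :
    A = A' := by
  obtain ⟨m, M⟩ := A
  obtain ⟨m', M'⟩ := A'
  have h1 := congrArg D.d h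
  have h2 := congrArg D.L h
  simp only [g] at h1 h2 hA hA'
  have : m = m' := by omega
  subst this
  congr 1
  ext i j
  rw [gU_val M, gU_val M', h2]

lemma g_BP (e : ℕ) (he : e ≤ 1) (A : SMat) (hA : e ≤ A.1) (h1 : UT A.2)
    (h2 : ∀ i, rowNonzero A.2 i) : BP 0 (g e A) ∧ ∀ j, j < A.1 → ∃ i, gU A.2 j i ≠ 0 := by
  have key : ∀ j, j < A.1 → ∃ i, gU A.2 j i ≠ 0 := by
    intro j hj
    obtain ⟨i, hi⟩ := h2 ⟨A.1 - 1 - j, by omega⟩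
    rw [gU_val A.2] at hi
    refine ⟨A.1 - 1 - i, ?_⟩
    rwa [show A.1 - 1 - (A.1 - 1 - j) = j by omega] at hi
  refine ⟨⟨?_, rfl, rfl, ?_⟩, key⟩
  · intro j i hi
    have := gU_supp h1 hi
    simp only [g]; omega
  · intro j hj
    simp only [g] at hj ⊢
    exact key j (by omega)

/-- Inverse of `g`. -/
def gi (m : ℕ) (x : D) : SMat := ⟨m, fun i j => x.L (m - 1 - i) (m - 1 - j)⟩

lemma g_gi (e m : ℕ) (x : D) (hx : BP 0 x) (hm : m - e = x.d)
    (hs : ∀ j i, x.L j i ≠ 0 → j < m) : g e (gi m x) = x := by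
  ext1
  · exact hm
  · funext j i
    simp only [g, gU, gi, ent]
    have a1 := hs j i
    have a2 := hx.sL j i
    split_ifs with h h'
    · congr 1 <;> omega
    · omega
    · by_contra hc
      have := a1 (Ne.symm hc)
      have := a2 (Ne.symm hc)
      omega
  · exact hx.sR.symm
  · exact hx.su.symm

lemma gi_mem (e m : ℕ) (he : e ≤ 1) (hem : e ≤ m) (x : D) (hx : BP 0 x) (hm : m - e = x.d)
    (hs : ∀ j i, x.L j i ≠ 0 → j < m) (hnz : ∀ j, j < m → ∃ i, x.L j i ≠ 0) :
    gi m x ∈ RMset₂ (sz 0 x) (rs x 0) := by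
  have hg := g_gi e m x hx hm hs
  refine ⟨⟨?_, ?_, ?_⟩, ?_⟩
  · intro i j hij
    by_contra hc
    have := hx.sL _ _ hc
    have := i.2
    simp only [gi] at *
    omega
  · intro i
    have hi := i.2
    simp only [gi] at hi
    obtain ⟨c, hc⟩ := hnz (m - 1 - i) (by omega)
    have := hx.sL _ _ hc
    refine ⟨⟨m - 1 - c, by simp only [gi]; omega⟩, ?_⟩
    simp only [gi]
    rwa [show m - 1 - (m - 1 - c) = c by omega]
  · rw [← sz_g e he _ hem, hg]
  · rw [← rs_g_zero e he _ hem, hg]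

lemma bij0 (n k : ℕ) : Set.BijOn (g 0) (RMset₂ n k)
    {x | (BP 0 x ∧ sz 0 x = n ∧ rs x 0 = k) ∧ x.L x.d = 0} := by
  refine ⟨?_, ?_, ?_⟩
  · rintro A ⟨⟨h1, h2, h3⟩, h4⟩
    refine ⟨⟨(g_BP 0 (by omega) A (by omega) h1 h2).1, ?_, ?_⟩, ?_⟩
    · rw [sz_g 0 (by omega) A (by omega), h3]
    · rw [rs_g_zero 0 (by omega) A (by omega), h4]
    · funext i
      simp [g, gU]
  · intro A _ A' _ h
    exact g_inj 0 A A' (by omega) (by omega) h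
  · rintro x ⟨⟨hx, rfl, rfl⟩, h0⟩
    have hs : ∀ j i, x.L j i ≠ 0 → j < x.d := by
      intro j i hi
      rcases (hx.sL j i hi).1.lt_or_eq with h | h
      · exact h
      · subst h; simp [h0] at hi
    exact ⟨gi x.d x, gi_mem 0 x.d (by omega) (by omega) x hx (by omega) hs hx.nL,
      g_gi 0 x.d x hx (by omega) hs⟩

lemma bij1 (n k : ℕ) (hn : 1 ≤ n) : Set.BijOn (g 1) (RMset₂ n k)
    {x | (BP 0 x ∧ sz 0 x = n ∧ rs x 0 = k) ∧ ¬ x.L x.d = 0} := by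
  have hpos : ∀ A ∈ RMset₂ n k, 1 ≤ A.1 := by
    rintro ⟨m, M⟩ ⟨⟨h1, h2, h3⟩, h4⟩
    by_contra hc
    have : m = 0 := by simpa using hc
    subst this
    simp [msize] at h3
    omega
  refine ⟨?_, ?_, ?_⟩
  · intro A hA
    have hp := hpos A hA
    obtain ⟨⟨h1, h2, h3⟩, h4⟩ := hA
    refine ⟨⟨(g_BP 1 (by omega) A (by omega) h1 h2).1, ?_, ?_⟩, ?_⟩
    · rw [sz_g 1 (by omega) A (by omega), h3]
    · rw [rs_g_zero 1 (by omega) A (by omega), h4]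
    · intro h
      obtain ⟨i, hi⟩ := (g_BP 1 (by omega) A (by omega) h1 h2).2 (A.1 - 1) (by omega)
      exact hi (congrFun h i)
  · intro A hA A' hA' h
    exact g_inj 1 A A' (hpos A hA) (hpos A' hA') h
  · rintro x ⟨⟨hx, rfl, rfl⟩, h0⟩
    have hs : ∀ j i, x.L j i ≠ 0 → j < x.d + 1 := by
      intro j i hi
      have := hx.sL j i hi
      omega
    refine ⟨gi (x.d + 1) x, gi_mem 1 _ (by omega) (by omega) x hx (by omega) hs ?_,
      g_gi 1 _ x hx (by omega) hs⟩
    intro j hj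
    rcases (Nat.lt_succ_iff.mp hj).lt_or_eq with h | h
    · exact hx.nL j h
    · subst h; exact Function.ne_iff.mp h0

open Classical in
theorem card_B (n k : ℕ) (hn : 1 ≤ n) :
    Nat.card {x : D // BP 0 x ∧ sz 0 x = n ∧ rs x 0 = k} = 2 * (RMset₂ n k).ncard := by
  let c : D → Prop := fun x => x.L x.d = 0
  let p : D → Prop := fun x => BP 0 x ∧ sz 0 x = n ∧ rs x 0 = k
  have e0 : RMset₂ n k ≃ {x : {x : D // p x} // c x.1} :=
    (Set.BijOn.equiv _ (bij0 n k)).trans (Equiv.subtypeSubtypeEquivSubtypeInter p c).symm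
  have e1 : RMset₂ n k ≃ {x : {x : D // p x} // ¬ c x.1} :=
    (Set.BijOn.equiv _ (bij1 n k hn)).trans
      (Equiv.subtypeSubtypeEquivSubtypeInter p (fun x => ¬ c x)).symm
  have e : RMset₂ n k ⊕ RMset₂ n k ≃ {x : D // p x} :=
    (Equiv.sumCongr e0 e1).trans (Equiv.sumCompl (fun x : {x : D // p x} => c x.1))
  rw [← Nat.card_congr e]
  by_cases hf : Finite (RMset₂ n k)
  · rw [Nat.card_sum, Nat.card_coe_set_eq]; ring
  · have := not_finite_iff_infinite.mp hf
    rw [Nat.card_eq_zero_of_infinite, ← Nat.card_coe_set_eq, Nat.card_eq_zero_of_infinite]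

/-! ### Self-dual Fishburn matrices -/

def fL {m : ℕ} (M : Mat m) (j i : ℕ) : ℕ := if 2 * j < m then ent M i j else 0

def fR {m : ℕ} (M : Mat m) (j i : ℕ) : ℕ :=
  if 2 * j + 1 < m ∧ i ≤ j then ent M i (m - 1 - j) else 0

def f (A : SMat) : D := ⟨A.1 / 2, fL A.2, fR A.2, 0⟩

def H (m : ℕ) (L R : ℕ → ℕ → ℕ) (i j : ℕ) : ℕ :=
  if j < i then 0 else
  if i + j + 1 ≤ m then (if 2 * j < m then L j i else R (m - 1 - j) i)
  else (if 2 * (m - 1 - i) < m then L (m - 1 - i) (m - 1 - j) else R i (m - 1 - j))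

lemma H_dual (m : ℕ) (L R : ℕ → ℕ → ℕ) (i j : ℕ) (hi : i < m) (hj : j < m) :
    H m L R i j = H m L R (m - 1 - j) (m - 1 - i) := by
  have a1 : m - 1 - (m - 1 - i) = i := by omega
  have a2 : m - 1 - (m - 1 - j) = j := by omega
  unfold H
  rw [a1, a2]
  split_ifs <;> first | rfl | omega | (congr 1 <;> omega)

lemma f_val_nw {m : ℕ} (M : Mat m) (i j : ℕ) (h : i + j + 1 ≤ m) :
    ent M i j = if 2 * j < m then fL M j i else fR M (m - 1 - j) i := by
  split_ifs with h1
  · simp [fL, h1]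
  · unfold fR
    rw [if_pos (by omega)]
    congr 1; omega

lemma sd_ent {m : ℕ} {M : Mat m} (h : SelfDual M) (i j : ℕ) (hi : i < m) (hj : j < m) :
    ent M i j = ent M (m - 1 - j) (m - 1 - i) := by
  have := congrFun (congrFun h ⟨i, hi⟩) ⟨j, hj⟩
  rw [← ent_val M] at this
  rw [this]
  simp only [dual]
  rw [← ent_val M]
  simp only [Fin.val_rev]
  congr 1 <;> omega

lemma f_val {m : ℕ} {M : Mat m} (hu : UT M) (hs : SelfDual M) (i j : Fin m) :
    M i j = H m (fL M) (fR M) i j := by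
  have hi := i.2
  have hj := j.2
  unfold H
  split_ifs with h1 h2 h3 h4
  · exact hu i j h1
  · rw [← ent_val M, f_val_nw M _ _ h2, if_pos h3]
  · rw [← ent_val M, f_val_nw M _ _ h2, if_neg h3]
  · rw [← ent_val M, sd_ent hs _ _ hi hj, f_val_nw M _ _ (by omega), if_pos h4]
  · rw [← ent_val M, sd_ent hs _ _ hi hj, f_val_nw M _ _ (by omega), if_neg h4]
    congr 1; omega

lemma sum_fold (m : ℕ) (a : ℕ → ℕ) : ∑ c ∈ range m, a c =
    ∑ j ∈ range (m / 2 + 1), ((if 2 * j < m then a j else 0) +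
      (if 2 * j + 1 < m then a (m - 1 - j) else 0)) := by
  rw [Finset.sum_add_distrib]
  have hR : ∀ d, m = d + d ∨ m = d + 1 + d →
      ∑ j ∈ range (d + 1), (if 2 * j + 1 < m then a (m - 1 - j) else 0) =
      ∑ j ∈ range d, a (m - d + j) := by
    intro d hd
    rw [Finset.sum_range_succ, if_neg (by omega), add_zero,
      ← Finset.sum_range_reflect (fun j => a (m - d + j))]
    apply Finset.sum_congr rfl
    intro j hj
    simp at hj
    rw [if_pos (by omega)]
    congr 1; omega
  rcases Nat.even_or_odd' m with ⟨d, hd | hd⟩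
  · rw [show m / 2 = d by omega, hR d (by omega), show m - d = d by omega,
      Finset.sum_range_succ, if_neg (by omega), add_zero]
    conv_lhs => rw [show m = d + d by omega, Finset.sum_range_add]
    congr 1
    apply Finset.sum_congr rfl
    intro j hj
    simp at hj
    rw [if_pos (by omega)]
  · rw [show m / 2 = d by omega, hR d (by omega), show m - d = d + 1 by omega]
    conv_lhs => rw [show m = (d + 1) + d by omega, Finset.sum_range_add]
    congr 1
    apply Finset.sum_congr rfl
    intro j hj
    simp at hj
    rw [if_pos (by omega)]

lemma rs_f (A : SMat) (hu : UT A.2) (i : ℕ) :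
    rs (f A) i = ∑ c ∈ range A.1, if i + c + 1 ≤ A.1 then ent A.2 i c else 0 := by
  rw [sum_fold]
  simp only [rs, f, Pi.zero_apply, zero_add]
  apply Finset.sum_congr rfl
  intro j _
  have h0 : ent A.2 i j ≠ 0 → i ≤ j := ent_ut hu
  congr 1
  · unfold fL
    split_ifs <;> first | rfl | (by_contra hc; have := h0 hc; omega)
  · unfold fR
    split_ifs <;> first | rfl | omega

lemma sz_f (A : SMat) (hu : UT A.2) : sz 0 (f A) = reducedSize A.2 := by
  have h0 : ∀ i, A.1 / 2 < i → rs (f A) i = 0 := by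
    intro i hi
    rw [rs_f A hu]
    apply Finset.sum_eq_zero
    intro c _
    split_ifs with h
    · by_contra hc
      have := ent_ut hu hc
      omega
    · rfl
  have h1 : sz 0 (f A) = ∑ i ∈ range (A.1 + 1), rs (f A) i := by
    apply Finset.sum_subset
    · intro i; simp [f]; omega
    · intro i _ hi
      simp [f] at hi
      exact h0 i (by omega)
  have h2 : rs (f A) A.1 = 0 := by
    rw [rs_f A hu]
    apply Finset.sum_eq_zero
    intro c _
    rw [if_neg (by omega)]
  rw [h1, Finset.sum_range_succ, h2, add_zero]
  simp only [rs_f A hu, reducedSize, Finset.sum_range, ent_val]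

lemma rs_f_zero (A : SMat) (hu : UT A.2) : rs (f A) 0 = firstRowSum A.2 := by
  obtain ⟨m, M⟩ := A
  rw [rs_f _ hu]
  simp only [firstRowSum]
  rcases Nat.eq_zero_or_pos m with rfl | hm
  · simp
  · rw [Finset.sum_eq_single (⟨0, hm⟩ : Fin m)]
    · simp only [Finset.sum_range, if_true]
      apply Finset.sum_congr rfl
      intro j _
      rw [if_pos (by have := j.2; omega), ← ent_val M]
    · intro i _ hi
      apply Finset.sum_eq_zero
      intro j _
      rw [if_neg]
      intro h
      exact hi (Fin.ext h)
    · simp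

lemma f_col {m : ℕ} {M : Mat m} (hc : ∀ j, colNonzero M j) (j : ℕ) (hj : 2 * j < m) :
    ∃ i, fL M j i ≠ 0 := by
  obtain ⟨i, hi⟩ := hc ⟨j, by omega⟩
  refine ⟨i, ?_⟩
  rw [← ent_val M] at hi
  simpa [fL, hj] using hi

lemma f_VP (A : SMat) (h : IsFishburn A.2) (hs : SelfDual A.2) : VP 0 (f A) := by
  obtain ⟨m, M⟩ := A
  obtain ⟨hu, hr, hc⟩ := h
  dsimp only at hu hr hc hs
  refine ⟨?_, ?_, ?_, ?_, ?_⟩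
  · intro j i hi
    simp only [f, fL] at hi ⊢
    split_ifs at hi
    · have := ent_ut hu hi
      omega
    · exact absurd rfl hi
  · intro j i hi
    simp only [f, fR] at hi ⊢
    split_ifs at hi
    · omega
    · exact absurd rfl hi
  · intro i hi; simp [f] at hi
  · intro j hj
    simp only [f] at hj ⊢
    exact f_col hc j (by omega)
  · intro j hj
    simp only [f, zero_add] at hj ⊢
    obtain ⟨c, hc⟩ := hr ⟨j, by omega⟩
    have hc2 := c.2
    rw [← ent_val M] at hc
    dsimp only at hc
    have hjc := ent_ut hu hc
    by_cases h : j + c + 1 ≤ m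
    · right
      rw [f_val_nw M _ _ h] at hc
      split_ifs at hc
      · exact ⟨c, Or.inl hc⟩
      · exact ⟨m - 1 - c, Or.inr hc⟩
    · left
      rw [sd_ent hs _ _ (by omega) hc2] at hc
      refine ⟨m - 1 - c, ?_⟩
      unfold fR
      rwa [if_pos (by omega)]

lemma f_parity (A : SMat) (h : IsFishburn A.2) : A.1 % 2 = 1 ↔ (f A).L (f A).d ≠ 0 := by
  obtain ⟨m, M⟩ := A
  change m % 2 = 1 ↔ fL M (m / 2) ≠ 0
  constructor
  · intro hm
    exact Function.ne_iff.mpr (f_col (M := M) h.2.2 (m / 2) (by omega))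
  · intro hm
    by_contra hc
    apply hm
    funext i
    simp only [fL]
    rw [if_neg (by omega)]
    rfl

lemma f_inj (A A' : SMat) (h : IsFishburn A.2) (hs : SelfDual A.2) (h' : IsFishburn A'.2)
    (hs' : SelfDual A'.2) (e : f A = f A') : A = A' := by
  have p := f_parity A h
  have p' := f_parity A' h'
  rw [e, ← p'] at p
  have h1 := congrArg D.d e
  have h2 := congrArg D.L e
  have h3 := congrArg D.R e
  obtain ⟨m, M⟩ := A
  obtain ⟨m', M'⟩ := A'
  simp only [f] at h1 h2 h3 p
  have : m = m' := by omega
  subst this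
  congr 1
  ext i j
  have c1 : M i j = _ := f_val h.1 hs i j
  have c2 : M' i j = _ := f_val h'.1 hs' i j
  rw [c1, c2, h2, h3]

def fi (m : ℕ) (x : D) : SMat := ⟨m, fun i j => H m x.L x.R i j⟩

lemma fi_ent (m : ℕ) (x : D) (i j : ℕ) (hi : i < m) (hj : j < m) :
    ent (fi m x).2 i j = H m x.L x.R i j := by
  unfold ent
  exact dif_pos (show i < m ∧ j < m from ⟨hi, hj⟩)

lemma f_fi (m : ℕ) (x : D) (hx : VP 0 x) (hm : m / 2 = x.d) (hp : m % 2 = 1 ↔ x.L x.d ≠ 0) :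
    f (fi m x) = x := by
  have hL0 : ∀ j i, x.L j i ≠ 0 → 2 * j < m := by
    intro j i hi
    have := hx.sL j i hi
    rcases this.1.lt_or_eq with h | h
    · omega
    · subst h
      have := hp.2 (Function.ne_iff.mpr ⟨i, hi⟩)
      omega
  ext1
  · exact hm
  · funext j i
    have a1 := hL0 j i
    have a2 := hx.sL j i
    change (if 2 * j < m then ent (fi m x).2 i j else 0) = x.L j i
    split_ifs with h
    · by_cases hij : i ≤ j
      · rw [fi_ent m x _ _ (by omega) (by omega)]
        unfold H
        rw [if_neg (by omega), if_pos (by omega), if_pos h]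
      · have : x.L j i = 0 := by by_contra hc; have := a2 hc; omega
        rw [this]
        by_cases hi : i < m
        · rw [fi_ent m x _ _ hi (by omega)]
          unfold H
          rw [if_pos (by omega)]
        · unfold ent
          rw [dif_neg]
          simp only [fi]; omega
    · by_contra hc
      exact h (a1 (Ne.symm hc))
  · funext j i
    have a2 := hx.sR j i
    change (if 2 * j + 1 < m ∧ i ≤ j then ent (fi m x).2 i (m - 1 - j) else 0) = x.R j i
    split_ifs with h
    · rw [fi_ent m x _ _ (by omega) (by omega)]
      unfold H
      rw [if_neg (by omega), if_pos (by omega), if_neg (by omega)]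
      congr 1; omega
    · by_contra hc
      have := a2 (Ne.symm hc)
      omega
  · funext i
    by_contra hc
    have := hx.su i (Ne.symm hc)
    omega

lemma fi_mem (m : ℕ) (x : D) (hx : VP 0 x) (hm : m / 2 = x.d)
    (hp : m % 2 = 1 ↔ x.L x.d ≠ 0) : fi m x ∈ Mset₂ (sz 0 x) (rs x 0) := by
  have hL0 : ∀ j i, x.L j i ≠ 0 → 2 * j < m := by
    intro j i hi
    have := hx.sL j i hi
    rcases this.1.lt_or_eq with h | h
    · omega
    · subst h
      have := hp.2 (Function.ne_iff.mpr ⟨i, hi⟩)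
      omega
  have hff := f_fi m x hx hm hp
  have hu : UT (fi m x).2 := by
    intro i j hij
    simp only [fi, H]
    rw [if_pos hij]
  have hs : SelfDual (fi m x).2 := by
    unfold SelfDual
    ext i j
    have := H_dual m x.L x.R i j i.2 j.2
    have hi : ((i.rev : Fin (fi m x).1) : ℕ) = m - 1 - i := by
      rw [Fin.val_rev]; simp only [fi]; omega
    have hj : ((j.rev : Fin (fi m x).1) : ℕ) = m - 1 - j := by
      rw [Fin.val_rev]; simp only [fi]; omega
    change H m x.L x.R i j = H m x.L x.R (j.rev : Fin (fi m x).1) (i.rev : Fin (fi m x).1)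
    rw [this, hi, hj]
  have hcol : ∀ c, c < m → ∃ i, i < m ∧ H m x.L x.R i c ≠ 0 := by
    intro c hc
    by_cases h : 2 * c < m
    · have : ∃ i, x.L c i ≠ 0 := by
        by_cases hcd : c < x.d
        · exact hx.nL c hcd
        · have : c = x.d := by omega
          subst this
          exact Function.ne_iff.mp (hp.1 (by omega))
      obtain ⟨i, hi⟩ := this
      have := hx.sL _ _ hi
      refine ⟨i, by omega, ?_⟩
      unfold H
      rwa [if_neg (by omega), if_pos (by omega), if_pos h]
    · obtain ⟨j, rfl⟩ : ∃ j, c = m - 1 - j := ⟨m - 1 - c, by omega⟩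
      have hjm : m - 1 - (m - 1 - j) = min j (m - 1) := by omega
      have main : ∀ j, j < x.d → ∃ i, i < m ∧ H m x.L x.R i (m - 1 - j) ≠ 0 := by
        intro j hj
        rcases hx.nR j hj with ⟨i, hi⟩ | ⟨j', hj' | hj'⟩
        · have := hx.sR _ _ hi
          refine ⟨i, by omega, ?_⟩
          unfold H
          rw [if_neg (by omega), if_pos (by omega), if_neg (by omega)]
          rwa [show m - 1 - (m - 1 - j) = j by omega]
        · rw [zero_add] at hj'
          have b1 := hx.sL _ _ hj'
          have b2 := hL0 _ _ hj'
          refine ⟨m - 1 - j', by omega, ?_⟩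
          rw [← H_dual m x.L x.R j j' (by omega) (by omega)]
          unfold H
          rwa [if_neg (by omega), if_pos (by omega), if_pos (by omega)]
        · rw [zero_add] at hj'
          have b1 := hx.sR _ _ hj'
          refine ⟨j', by omega, ?_⟩
          rw [H_dual m x.L x.R _ _ (by omega) (by omega),
            show m - 1 - (m - 1 - j) = j by omega]
          unfold H
          rw [if_neg (by omega), if_pos (by omega), if_neg (by omega)]
          rwa [show m - 1 - (m - 1 - j') = j' by omega]
      by_cases hj : j < m
      · exact main j (by omega)
      · have := main (m - 1) (by omega)
        rwa [show m - 1 - (m - 1) = m - 1 - j by omega] at this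
  have hcn : ∀ c, colNonzero (fi m x).2 c := by
    intro c
    obtain ⟨i, hi, h⟩ := hcol c c.2
    exact ⟨⟨i, hi⟩, h⟩
  have hrn : ∀ c, rowNonzero (fi m x).2 c := by
    intro c
    obtain ⟨i, hi⟩ := hcn c.rev
    refine ⟨i.rev, ?_⟩
    rw [hs]
    simpa [dual] using hi
  refine ⟨⟨⟨hu, hrn, hcn⟩, hs, ?_⟩, ?_⟩
  · rw [← sz_f _ hu, hff]
  · rw [← rs_f_zero _ hu, hff]

lemma bijM (n k : ℕ) : Set.BijOn f (Mset₂ n k) {x | VP 0 x ∧ sz 0 x = n ∧ rs x 0 = k} := by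
  refine ⟨?_, ?_, ?_⟩
  · rintro A ⟨⟨h1, h2, h3⟩, h4⟩
    exact ⟨f_VP A h1 h2, by rw [sz_f A h1.1, h3], by rw [rs_f_zero A h1.1, h4]⟩
  · rintro A ⟨⟨h1, h2, h3⟩, h4⟩ A' ⟨⟨h1', h2', h3'⟩, h4'⟩ h
    exact f_inj A A' h1 h2 h1' h2' h
  · rintro x ⟨hx, rfl, rfl⟩
    by_cases h : x.L x.d = 0
    · have hp : (2 * x.d) % 2 = 1 ↔ x.L x.d ≠ 0 := by simp [h]
      exact ⟨fi (2 * x.d) x, fi_mem _ x hx (by omega) hp, f_fi _ x hx (by omega) hp⟩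
    · have hp : (2 * x.d + 1) % 2 = 1 ↔ x.L x.d ≠ 0 := by
        simp only [ne_eq, h, not_false_eq_true, iff_true]; omega
      exact ⟨fi (2 * x.d + 1) x, fi_mem _ x hx (by omega) hp, f_fi _ x hx (by omega) hp⟩

end SD

/-- `|M(n,k)| = 2 |RM(n,k)|` for all `n ≥ 1`, `k ≥ 0`. -/
theorem stmt14 (n k : ℕ) (hn : 1 ≤ n) :
    (Mset₂ n k).ncard = 2 * (RMset₂ n k).ncard := by
  obtain ⟨e⟩ := SD.main_equiv n 0 k
  rw [← SD.card_B n k hn, ← Nat.card_congr e, ← Nat.card_coe_set_eq]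
  exact Nat.card_congr (Set.BijOn.equiv _ (SD.bijM n k))
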